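/- If H̃ ∈ ℝ^{n×n²} satisfies the row-wise skew-symmetry condition h̃_{i,(k,j)} = −h̃_{k,(i,j)} for all i, j, k ∈ {1, …, n}, then H̃ is energy-preserving, i.e. xᵀH̃(x⊗x) = 0 for all x ∈ ℝⁿ. -/

import Mathlib

/-- The quadratic map `x ↦ H (x ⊗ x)` for a matrix `H ∈ ℝ^{n×n²}` partitioned into `n`
blocks `H = [H_1, …, H_n]`: `H i` is the `i`-th block and `H i j k` is the entry
`h_{i,(j,k)}`, so that the `j`-th component of `H (x ⊗ x)` is `∑_{i,k} h_{i,(j,k)} x_i x_k`. -/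
def quadMap {n : ℕ} (H : Fin n → Matrix (Fin n) (Fin n) ℝ) (x : Fin n → ℝ) : Fin n → ℝ :=
  fun j => ∑ i, ∑ k, H i j k * (x i * x k)

/-- `H` is energy-preserving if `xᵀ H (x ⊗ x) = 0` for all `x ∈ ℝⁿ`. -/
def EnergyPreserving {n : ℕ} (H : Fin n → Matrix (Fin n) (Fin n) ℝ) : Prop :=
  ∀ x : Fin n → ℝ, ∑ j, x j * quadMap H x j = 0

open scoped Matrix

theorem dotProduct_mulVec_self_eq_zero_of_transpose_eq_neg {ι R : Type*} [Fintype ι]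
    [NonUnitalCommRing R] [IsAddTorsionFree R] {A : Matrix ι ι R} (hA : Aᵀ = -A) (x : ι → R) :
    x ⬝ᵥ A *ᵥ x = 0 := by
  refine neg_eq_self.mp ?_
  calc
    -(x ⬝ᵥ A *ᵥ x) = x ⬝ᵥ Aᵀ *ᵥ x := by rw [hA, Matrix.neg_mulVec, dotProduct_neg]
    _ = x ⬝ᵥ A *ᵥ x := Matrix.dotProduct_transpose_mulVec A x x

theorem transpose_of_mulVec_eq_neg {ι κ R : Type*} [Fintype κ] [NonUnitalNonAssocRing R]
    {H : ι → Matrix ι κ R} (hskew : ∀ i j k, H i k j = -(H k i j)) (y : κ → R) :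
    (Matrix.of fun i => H i *ᵥ y)ᵀ = -Matrix.of fun i => H i *ᵥ y := by
  ext k i
  simp only [Matrix.transpose_apply, Matrix.neg_apply, Matrix.of_apply, Matrix.mulVec,
    dotProduct, hskew i _ k, neg_mul, Finset.sum_neg_distrib]

-- With `y` fixed, `H (x ⊗ y)` is linear in `x`, and its matrix inherits the skew-symmetry.
theorem rowwise_skew_energy_preserving_general {ι κ R : Type*} [Fintype ι] [Fintype κ]
    [NonUnitalCommRing R] [IsAddTorsionFree R] {H : ι → Matrix ι κ R}
    (hskew : ∀ i j k, H i k j = -(H k i j)) (x : ι → R) (y : κ → R) :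
    x ⬝ᵥ ∑ i, x i • (H i *ᵥ y) = 0 := by
  calc
    x ⬝ᵥ ∑ i, x i • (H i *ᵥ y) = x ⬝ᵥ x ᵥ* Matrix.of fun i => H i *ᵥ y :=
      congrArg (x ⬝ᵥ ·) (Matrix.vecMul_eq_sum x _).symm
    _ = x ⬝ᵥ (Matrix.of fun i => H i *ᵥ y) *ᵥ x := by
      rw [dotProduct_comm, Matrix.dotProduct_mulVec]
    _ = 0 := dotProduct_mulVec_self_eq_zero_of_transpose_eq_neg
      (transpose_of_mulVec_eq_neg hskew y) x

theorem quadMap_eq_sum_smul_mulVec {n : ℕ} (H : Fin n → Matrix (Fin n) (Fin n) ℝ)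
    (x : Fin n → ℝ) : quadMap H x = ∑ i, x i • (H i *ᵥ x) := by
  ext j
  simp only [quadMap, Finset.sum_apply, Pi.smul_apply, smul_eq_mul, Matrix.mulVec, dotProduct,
    Finset.mul_sum, mul_left_comm]

/-- The row-wise skew-symmetry condition `h̃_{i,(k,j)} = −h̃_{k,(i,j)}` implies that `H̃` is
energy-preserving. -/
theorem rowwise_skew_energy_preserving {n : ℕ}
    (Ht : Fin n → Matrix (Fin n) (Fin n) ℝ)
    (hskew : ∀ i j k : Fin n, Ht i k j = -(Ht k i j)) :
    EnergyPreserving Ht := by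
  intro x
  simpa only [dotProduct, quadMap_eq_sum_smul_mulVec] using
    rowwise_skew_energy_preserving_general hskew x x
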